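/- arXiv:2502.04572 — 3 statements merged into one kernel-verified Lean document; each statement's English description precedes it below -/
import Mathlib

section
/- Let d ≥ 1, 0 < α < d/2, and s > 0. Then for every x ∈ ℝ^d, ∫_{ℝ^d} e^{-‖z-x‖²/(2s)}·‖z‖^{2α-d} dz ≤ ∫_{ℝ^d} e^{-‖z‖²/(2s)}·‖z‖^{2α-d} dz; that is, the convolution of the centered Gaussian density with the Riesz-type kernel ‖·‖^{2α-d} attains its maximum at the origin. -/
/-!
Write `f` for the Gaussian and `g` for the Riesz kernel. Both are functions of the norm that
decrease with it, so `(f z - f (z - x)) * (g z - g (z - x)) ≥ 0` for `z ≠ 0, x`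
(`gauss_riesz_rearrangement`). Integrating the expanded inequality over `z`, the translation
`z ↦ z - x` identifies the two diagonal terms and the reflection `z ↦ x - z` identifies the two
cross terms. This gives `2 ∫ f (z - x) g z ≤ 2 ∫ f z g z`. All terms are kept on the positive
side, so the argument runs in `ℝ≥0∞` without integrability considerations.
-/

open MeasureTheory
open scoped ENNReal

/-- The expanded form of `(f a - f b) * (g a - g b) ≥ 0` for the radial profiles `f` and `g` of the
Gaussian and of the Riesz kernel. Positivity of `a` and `b` excludes the convention `0 ^ p = 0`
for `p < 0`, which would break the monotonicity of `g`. -/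
lemma gauss_riesz_rearrangement {s p a b : ℝ} (hs : 0 < s) (hp : p ≤ 0) (ha : 0 < a)
    (hb : 0 < b) :
    Real.exp (-b ^ 2 / (2 * s)) * a ^ p + Real.exp (-a ^ 2 / (2 * s)) * b ^ p
      ≤ Real.exp (-a ^ 2 / (2 * s)) * a ^ p + Real.exp (-b ^ 2 / (2 * s)) * b ^ p := by
  wlog hab : a ≤ b generalizing a b
  · linarith [this hb ha (le_of_not_ge hab)]
  have hf : Real.exp (-b ^ 2 / (2 * s)) ≤ Real.exp (-a ^ 2 / (2 * s)) := by gcongr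
  have hg : b ^ p ≤ a ^ p := Real.rpow_le_rpow_of_nonpos ha hab hp
  nlinarith [mul_nonneg (sub_nonneg.2 hf) (sub_nonneg.2 hg)]

/-- For `0 < α < d/2` and `s > 0`, the convolution of the centered Gaussian density with the
Riesz-type kernel `‖·‖^{2α-d}` attains its maximum at the origin:
`∫ e^{-‖z-x‖²/(2s)} ‖z‖^{2α-d} dz ≤ ∫ e^{-‖z‖²/(2s)} ‖z‖^{2α-d} dz`. -/
theorem gauss_riesz_convolution_max_at_origin (d : ℕ) (hd : 1 ≤ d) (α : ℝ)
    (hα0 : 0 < α) (hαd : α < d / 2) (s : ℝ) (hs : 0 < s)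
    (x : EuclideanSpace ℝ (Fin d)) :
    (∫⁻ z : EuclideanSpace ℝ (Fin d),
        ENNReal.ofReal (Real.exp (-‖z - x‖ ^ 2 / (2 * s)) * ‖z‖ ^ (2 * α - (d : ℝ))))
      ≤ ∫⁻ z : EuclideanSpace ℝ (Fin d),
          ENNReal.ofReal (Real.exp (-‖z‖ ^ 2 / (2 * s)) * ‖z‖ ^ (2 * α - (d : ℝ))) := by
  have : Nontrivial (EuclideanSpace ℝ (Fin d)) :=
    Module.nontrivial_of_finrank_pos (R := ℝ) (by simp; omega)
  set p : ℝ := 2 * α - d with hp_def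
  have hp : p ≤ 0 := by linarith
  set H : EuclideanSpace ℝ (Fin d) → EuclideanSpace ℝ (Fin d) → ℝ≥0∞ := fun u v =>
    ENNReal.ofReal (Real.exp (-‖u‖ ^ 2 / (2 * s)) * ‖v‖ ^ p) with hH
  have hdiag : ∫⁻ z, H (z - x) (z - x) = ∫⁻ z, H z z :=
    lintegral_sub_right_eq_self (fun z => H z z) x
  have hcross : ∫⁻ z, H z (z - x) = ∫⁻ z, H (z - x) z := by
    rw [← lintegral_sub_left_eq_self (fun z => H z (z - x)) x]
    refine lintegral_congr fun z => ?_
    simp only [hH, norm_sub_rev x z, sub_sub_cancel_left, norm_neg]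
  have hpt : ∀ᵐ z : EuclideanSpace ℝ (Fin d),
      H (z - x) z + H z (z - x) ≤ H z z + H (z - x) (z - x) := by
    filter_upwards [Measure.ae_ne volume 0, Measure.ae_ne volume x] with z hz hzx
    simp only [hH]
    rw [← ENNReal.ofReal_add (by positivity) (by positivity),
      ← ENNReal.ofReal_add (by positivity) (by positivity)]
    exact ENNReal.ofReal_le_ofReal (gauss_riesz_rearrangement hs hp (norm_pos_iff.2 hz)
      (norm_pos_iff.2 (sub_ne_zero.2 hzx)))
  have hint := lintegral_mono_ae hpt
  rw [lintegral_add_left (by simp only [hH]; fun_prop),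
    lintegral_add_left (by simp only [hH]; fun_prop), hdiag, hcross, ← two_mul, ← two_mul] at hint
  exact (ENNReal.mul_le_mul_iff_right two_ne_zero ENNReal.ofNat_ne_top).1 hint
end

section
/- Let d ≥ 1, 0 < α < d/2, and s > 0. Then for all x, x′ ∈ ℝ^d, ∬_{ℝ^d×ℝ^d} e^{-‖z-x‖²/(2s)}·e^{-‖z′-x′‖²/(2s)}·‖z-z′‖^{2α-d} dz dz′ ≤ ∬_{ℝ^d×ℝ^d} e^{-‖z‖²/(2s)}·e^{-‖z′‖²/(2s)}·‖z-z′‖^{2α-d} dz dz′; that is, the supremum over x, x′ of the double Gaussian–Riesz integral is achieved at x = x′. -/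
/-!
The Riesz kernel is a mixture of Gaussians: with `p = (d - 2α) / 2 > 0` and `w ≠ 0`,
`‖w‖ ^ (2α - d) = Γ(p)⁻¹ ∫₀^∞ t ^ (p - 1) exp (-‖w‖² t) dt` (`riesz_mixture`). By Tonelli
(`lintegral_riesz_eq`) it suffices to compare the double integrals for each fixed `t > 0`, where
the integrand is `exp` of minus the quadratic polynomial
`Q_{x,x'}(z, z') = a ‖z - x‖² + a ‖z' - x'‖² + t ‖z - z'‖²`, `a = 1 / (2s)`. Completing the square,
`Q_{x,x'}(m + u, m' + u') = Q_{0,0}(u, u') + const` with `const ≥ 0`, where `(m, m')` is the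
minimizer of `Q_{x,x'}` (`quadratic_shift_le`). The comparison then follows from translation
invariance of Lebesgue measure.
-/

open MeasureTheory
open scoped ENNReal

/-- The integrand at mixture parameter `t`: two Gaussians centered at `x`, `x'`, times the density
in `t` of the Gaussian mixture that represents `‖z - z'‖ ^ (-2p)`. -/
noncomputable def mixtureIntegrand {d : ℕ} (s p : ℝ) (x x' : EuclideanSpace ℝ (Fin d)) (t : ℝ)
    (z z' : EuclideanSpace ℝ (Fin d)) : ℝ :=
  Real.exp (-‖z - x‖ ^ 2 / (2 * s)) * Real.exp (-‖z' - x'‖ ^ 2 / (2 * s)) *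
    (t ^ (p - 1) * Real.exp (-(‖z - z'‖ ^ 2 * t)) / Real.Gamma p)

lemma riesz_mixture {p : ℝ} (hp : 0 < p) {r : ℝ} (hr : 0 < r) {c : ℝ} (hc : 0 ≤ c) :
    ENNReal.ofReal (c * r ^ (-(2 * p))) = ∫⁻ t in Set.Ioi (0 : ℝ),
      ENNReal.ofReal (c * (t ^ (p - 1) * Real.exp (-(r ^ 2 * t)) / Real.Gamma p)) := by
  have hr2 : 0 < r ^ 2 := by positivity
  have hΓ := Real.Gamma_pos_of_pos hp
  have hI := Real.integral_rpow_mul_exp_neg_mul_Ioi hp hr2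
  have hval : (1 / r ^ 2) ^ p = r ^ (-(2 * p)) := by
    rw [one_div, Real.inv_rpow hr2.le, Real.rpow_neg hr.le, Real.rpow_mul hr.le]
    norm_num
  have hpos : 0 < (1 / r ^ 2) ^ p * Real.Gamma p := by positivity
  have hint : Integrable (fun t : ℝ => t ^ (p - 1) * Real.exp (-(r ^ 2 * t)))
      (volume.restrict (Set.Ioi 0)) := by
    -- the integral is nonzero, so the integrand cannot fail to be integrable
    by_contra h
    rw [integral_undef h] at hI
    exact hpos.ne hI
  rw [← ofReal_integral_eq_lintegral_ofReal ((hint.div_const _).const_mul c)]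
  · rw [integral_const_mul, integral_div, hI, hval, mul_div_cancel_right₀ _ hΓ.ne']
  · filter_upwards [ae_restrict_mem measurableSet_Ioi] with t ht
    have ht' : (0 : ℝ) < t := ht
    simp only [Pi.zero_apply]
    positivity

lemma measurable_mixtureIntegrand {d : ℕ} (s p : ℝ) (x x' : EuclideanSpace ℝ (Fin d)) :
    Measurable (fun q : (EuclideanSpace ℝ (Fin d) × EuclideanSpace ℝ (Fin d)) × ℝ =>
      ENNReal.ofReal (mixtureIntegrand s p x x' q.2 q.1.1 q.1.2)) := by
  unfold mixtureIntegrand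
  fun_prop

lemma lintegral_riesz_eq {d : ℕ} (hd : 1 ≤ d) (s : ℝ) {p : ℝ} (hp : 0 < p)
    (x x' : EuclideanSpace ℝ (Fin d)) :
    (∫⁻ z : EuclideanSpace ℝ (Fin d), ∫⁻ z' : EuclideanSpace ℝ (Fin d),
        ENNReal.ofReal (Real.exp (-‖z - x‖ ^ 2 / (2 * s))
          * Real.exp (-‖z' - x'‖ ^ 2 / (2 * s)) * ‖z - z'‖ ^ (-(2 * p))))
      = ∫⁻ t in Set.Ioi (0 : ℝ), ∫⁻ z : EuclideanSpace ℝ (Fin d),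
          ∫⁻ z' : EuclideanSpace ℝ (Fin d),
            ENNReal.ofReal (mixtureIntegrand s p x x' t z z') := by
  have : Nonempty (Fin d) := ⟨⟨0, hd⟩⟩
  have hm := measurable_mixtureIntegrand s p x x'
  have hinner : ∀ z : EuclideanSpace ℝ (Fin d),
      (∫⁻ z' : EuclideanSpace ℝ (Fin d),
        ENNReal.ofReal (Real.exp (-‖z - x‖ ^ 2 / (2 * s))
          * Real.exp (-‖z' - x'‖ ^ 2 / (2 * s)) * ‖z - z'‖ ^ (-(2 * p))))
      = ∫⁻ t in Set.Ioi (0 : ℝ), ∫⁻ z' : EuclideanSpace ℝ (Fin d),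
          ENNReal.ofReal (mixtureIntegrand s p x x' t z z') := by
    intro z
    rw [lintegral_lintegral_swap]
    · refine lintegral_congr_ae ?_
      -- the mixture formula fails only on the null set `z' = z`, where `0 ^ (-(2 * p)) = 0`
      filter_upwards [Measure.ae_ne volume z] with z' hz'
      exact riesz_mixture hp (norm_pos_iff.2 (sub_ne_zero.2 hz'.symm)) (by positivity)
    · have : Measurable (fun q : ℝ × EuclideanSpace ℝ (Fin d) => ((z, q.2), q.1)) := by fun_prop
      exact (hm.comp this).aemeasurable
  simp_rw [hinner]
  rw [lintegral_lintegral_swap]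
  have : Measurable (fun q : (EuclideanSpace ℝ (Fin d) × ℝ) × EuclideanSpace ℝ (Fin d) =>
      ((q.1.1, q.2), q.1.2)) := by fun_prop
  exact (Measurable.lintegral_prod_right' (hm.comp this)).aemeasurable

/-- Completing the square: `m = x - l • (x - x')` and `m' = x' + l • (x - x')` with
`l = t / (a + 2 * t)` minimize `a ‖z - x‖² + a ‖z' - x'‖² + t ‖z - z'‖²`, and the difference of the
two sides is this minimum. -/
lemma quadratic_shift_le {E : Type*} [NormedAddCommGroup E] [InnerProductSpace ℝ E]
    {a t l : ℝ} (ha : 0 < a) (ht : 0 < t) (hl : l = t / (a + 2 * t)) (x x' u u' : E) :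
    a * ‖u‖ ^ 2 + a * ‖u'‖ ^ 2 + t * ‖u - u'‖ ^ 2 ≤
      a * ‖u + (x - l • (x - x')) - x‖ ^ 2 + a * ‖u' + (x' + l • (x - x')) - x'‖ ^ 2 +
        t * ‖(u + (x - l • (x - x'))) - (u' + (x' + l • (x - x')))‖ ^ 2 := by
  have h1 : u + (x - l • (x - x')) - x = u - l • (x - x') := by abel
  have h2 : u' + (x' + l • (x - x')) - x' = u' + l • (x - x') := by abel
  have h3 : (u + (x - l • (x - x'))) - (u' + (x' + l • (x - x'))) =
      (u - u') + (1 - 2 * l) • (x - x') := by module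
  rw [h1, h2, h3, norm_sub_sq_real u (l • (x - x')), norm_add_sq_real u', norm_add_sq_real (u - u')]
  simp only [inner_smul_right, inner_sub_left, norm_smul, mul_pow]
  -- stationarity of `(m, m')`: the terms linear in `(u, u')` cancel
  have hst : t * (1 - 2 * l) = a * l := by rw [hl]; field_simp; ring
  generalize x - x' = h
  have hA : 0 ≤ a * (‖l‖ ^ 2 * ‖h‖ ^ 2) := by positivity
  have hB : 0 ≤ t * (‖1 - 2 * l‖ ^ 2 * ‖h‖ ^ 2) := by positivity
  linear_combination 2 * hA + hB - 2 * (inner ℝ u h - inner ℝ u' h) * hst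

lemma lintegral_mixtureIntegrand_le {d : ℕ} {s p t : ℝ} (hs : 0 < s) (hp : 0 < p) (ht : 0 < t)
    (x x' : EuclideanSpace ℝ (Fin d)) :
    (∫⁻ z : EuclideanSpace ℝ (Fin d), ∫⁻ z' : EuclideanSpace ℝ (Fin d),
        ENNReal.ofReal (mixtureIntegrand s p x x' t z z')) ≤
      ∫⁻ z : EuclideanSpace ℝ (Fin d), ∫⁻ z' : EuclideanSpace ℝ (Fin d),
        ENNReal.ofReal (mixtureIntegrand s p 0 0 t z z') := by
  obtain ⟨l, hl⟩ : ∃ l, l = t / (1 / (2 * s) + 2 * t) := ⟨_, rfl⟩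
  rw [← lintegral_add_right_eq_self _ (x - l • (x - x'))]
  refine lintegral_mono fun u => ?_
  dsimp only
  rw [← lintegral_add_right_eq_self _ (x' + l • (x - x'))]
  refine lintegral_mono fun u' => ENNReal.ofReal_le_ofReal ?_
  have hq := quadratic_shift_le (a := 1 / (2 * s)) (by positivity) ht hl x x' u u'
  have hΓ := Real.Gamma_pos_of_pos hp
  -- gathers the three exponentials into one
  have key : ∀ A B C : ℝ, Real.exp (-A / (2 * s)) * Real.exp (-B / (2 * s)) *
      (t ^ (p - 1) * Real.exp (-(C * t)) / Real.Gamma p) =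
      t ^ (p - 1) / Real.Gamma p *
        Real.exp (-(1 / (2 * s) * A + 1 / (2 * s) * B + t * C)) := by
    intro A B C
    rw [show -(1 / (2 * s) * A + 1 / (2 * s) * B + t * C) =
      -A / (2 * s) + -B / (2 * s) + -(C * t) by ring, Real.exp_add, Real.exp_add]
    ring
  unfold mixtureIntegrand
  rw [key, key, sub_zero, sub_zero]
  gcongr

/-- For `0 < α < d/2` and `s > 0`, the double Gaussian–Riesz integral is maximized when the
two Gaussians share the same center:
`∬ e^{-‖z-x‖²/(2s)} e^{-‖z'-x'‖²/(2s)} ‖z-z'‖^{2α-d} ≤ ∬ e^{-‖z‖²/(2s)} e^{-‖z'‖²/(2s)} ‖z-z'‖^{2α-d}`. -/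
theorem double_gauss_riesz_max_at_equal_centers (d : ℕ) (hd : 1 ≤ d) (α : ℝ)
    (hα0 : 0 < α) (hαd : α < d / 2) (s : ℝ) (hs : 0 < s)
    (x x' : EuclideanSpace ℝ (Fin d)) :
    (∫⁻ z : EuclideanSpace ℝ (Fin d), ∫⁻ z' : EuclideanSpace ℝ (Fin d),
        ENNReal.ofReal (Real.exp (-‖z - x‖ ^ 2 / (2 * s))
          * Real.exp (-‖z' - x'‖ ^ 2 / (2 * s)) * ‖z - z'‖ ^ (2 * α - (d : ℝ))))
      ≤ ∫⁻ z : EuclideanSpace ℝ (Fin d), ∫⁻ z' : EuclideanSpace ℝ (Fin d),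
          ENNReal.ofReal (Real.exp (-‖z‖ ^ 2 / (2 * s))
            * Real.exp (-‖z'‖ ^ 2 / (2 * s)) * ‖z - z'‖ ^ (2 * α - (d : ℝ))) := by
  obtain ⟨p, hpe⟩ : ∃ p : ℝ, p = (d - 2 * α) / 2 := ⟨_, rfl⟩
  have hp : 0 < p := by rw [hpe]; linarith
  have he : 2 * α - (d : ℝ) = -(2 * p) := by rw [hpe]; ring
  rw [he]
  have h0 := lintegral_riesz_eq hd s hp 0 0
  simp only [sub_zero] at h0
  rw [lintegral_riesz_eq hd s hp x x', h0]
  exact setLIntegral_mono' measurableSet_Ioi fun t ht => lintegral_mixtureIntegrand_le hs hp ht x x'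
end

section
/- Let d ≥ 1 and let α satisfy 0 < α < d/2 and α > (d-2)/2. Then there exists a constant C > 0 (depending only on α and d) such that for every s > 0 and all x, x′ ∈ ℝ^d, ∬_{ℝ^d×ℝ^d} (2πs)^{-d}·e^{-‖z-x‖²/(2s)}·e^{-‖z′-x′‖²/(2s)}·‖z-z′‖^{2α-d} dz dz′ ≤ C·s^{(2α-d)/2}. In particular the double integral is finite, and since (2α-d)/2 > -1, the function s ↦ C·s^{(2α-d)/2} is integrable over any bounded time interval (0,t). -/
/-!
Fix `z` and integrate in `z'` first. Where `‖z - z'‖ < √s` the Gaussian factor is at most `1` and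
the Riesz kernel integrates over the ball of radius `√s` to a multiple of `(√s)^(2α)`
(`lintegral_ball_norm_rpow`, polar coordinates; this uses `0 < α`). Where `‖z - z'‖ ≥ √s` the
Riesz kernel is at most `(√s)^(2α-d)`, since its exponent is negative, and the Gaussian has total
mass `(2πs)^(d/2)` (`lintegral_gauss`). Both contributions are uniform in `z` and `x'`, so the
remaining `z`-integral is again a Gaussian mass, and the powers of `s` combine to `s^((2α-d)/2)`.
-/

open MeasureTheory
open scoped ENNReal

/-- Polar coordinates: the exponent `2 * α - d` is locally integrable because
`r^(d-1) * r^(2α-d) = r^(2α-1)` with `α > 0`. -/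
lemma lintegral_ball_norm_rpow (d : ℕ) (hd : 1 ≤ d) (α : ℝ) (hα0 : 0 < α) :
    ∃ K : ℝ, 0 ≤ K ∧ ∀ R : ℝ, 0 < R →
      ∫⁻ w in Metric.ball (0 : EuclideanSpace ℝ (Fin d)) R,
        ENNReal.ofReal (‖w‖ ^ (2 * α - (d : ℝ))) = ENNReal.ofReal (K * R ^ (2 * α)) := by
  have : Nonempty (Fin d) := ⟨⟨0, hd⟩⟩
  refine ⟨d * (volume.real (Metric.ball (0 : EuclideanSpace ℝ (Fin d)) 1) * (2 * α)⁻¹),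
    by positivity, fun R hR => ?_⟩
  have hpow : ∀ y : ℝ, 0 < y → y ^ (d - 1) * y ^ (2 * α - (d : ℝ)) = y ^ (2 * α - 1) := by
    intro y hy
    rw [← Real.rpow_natCast, ← Real.rpow_add hy, Nat.cast_sub hd]
    congr 1
    push_cast
    ring
  have hint1 : IntegrableOn (fun y : ℝ => y ^ (2 * α - 1)) (Set.Ioo 0 R) := by
    have h := intervalIntegral.intervalIntegrable_rpow' (a := 0) (b := R) (r := 2 * α - 1)
      (by linarith)
    rw [intervalIntegrable_iff_integrableOn_Ioo_of_le hR.le] at h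
    exact h
  have hint : IntegrableOn (fun w : EuclideanSpace ℝ (Fin d) => ‖w‖ ^ (2 * α - (d : ℝ)))
      (Metric.ball 0 R) := by
    rw [integrableOn_fun_norm_addHaar volume (f := fun y : ℝ => y ^ (2 * α - (d : ℝ)))]
    refine hint1.congr_fun ?_ measurableSet_Ioo
    intro y hy
    simp [hpow y hy.1]
  rw [← ofReal_integral_eq_lintegral_ofReal hint (ae_of_all _ fun w => by positivity)]
  congr 1
  have hind : ∀ w : EuclideanSpace ℝ (Fin d),
      (Metric.ball 0 R).indicator (fun w => ‖w‖ ^ (2 * α - (d : ℝ))) w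
        = (Set.Iio R).indicator (fun y : ℝ => y ^ (2 * α - (d : ℝ))) ‖w‖ := by
    intro w
    simp [Set.indicator]
  have hrad : ∫ y in Set.Ioi (0 : ℝ), y ^ (d - 1) •
      (Set.Iio R).indicator (fun y : ℝ => y ^ (2 * α - (d : ℝ))) y = (2 * α)⁻¹ * R ^ (2 * α) := by
    calc _ = ∫ y in Set.Ioi (0 : ℝ), (Set.Iio R).indicator (fun y : ℝ => y ^ (2 * α - 1)) y := by
            refine setIntegral_congr_fun measurableSet_Ioi fun y hy => ?_
            by_cases h : y < R <;> simp [h, hpow y hy]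
      _ = ∫ y in (0 : ℝ)..R, y ^ (2 * α - 1) := by
            rw [setIntegral_indicator measurableSet_Iio, Set.Ioi_inter_Iio,
              intervalIntegral.integral_of_le hR.le, integral_Ioc_eq_integral_Ioo]
      _ = _ := by
            rw [integral_rpow (Or.inl (by linarith)), sub_add_cancel,
              Real.zero_rpow (by positivity)]
            ring
  rw [← integral_indicator measurableSet_ball, integral_congr_ae (ae_of_all _ hind),
    integral_fun_norm_addHaar volume, finrank_euclideanSpace_fin, hrad]
  simp only [nsmul_eq_mul, smul_eq_mul]
  ring

lemma lintegral_gauss (d : ℕ) (s : ℝ) (hs : 0 < s) (x : EuclideanSpace ℝ (Fin d)) :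
    ∫⁻ z : EuclideanSpace ℝ (Fin d), ENNReal.ofReal (Real.exp (-‖z - x‖ ^ 2 / (2 * s)))
      = ENNReal.ofReal ((2 * Real.pi * s) ^ ((d : ℝ) / 2)) := by
  rw [lintegral_sub_right_eq_self (μ := volume)
    (fun z : EuclideanSpace ℝ (Fin d) => ENNReal.ofReal (Real.exp (-‖z‖ ^ 2 / (2 * s)))) x]
  have hval := GaussianFourier.integral_rexp_neg_mul_sq_norm (V := EuclideanSpace ℝ (Fin d))
    (b := (2 * s)⁻¹) (by positivity)
  have hfun : (fun v : EuclideanSpace ℝ (Fin d) => Real.exp (-(2 * s)⁻¹ * ‖v‖ ^ 2))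
      = fun v => Real.exp (-‖v‖ ^ 2 / (2 * s)) := by
    funext v
    congr 1
    ring
  have hbase : Real.pi / (2 * s)⁻¹ = 2 * Real.pi * s := by
    field_simp
  rw [hfun, finrank_euclideanSpace_fin, hbase] at hval
  -- A nonzero Bochner integral forces integrability.
  have hint : Integrable (fun v : EuclideanSpace ℝ (Fin d) => Real.exp (-‖v‖ ^ 2 / (2 * s))) := by
    refine Integrable.of_integral_ne_zero ?_
    rw [hval]
    have := Real.pi_pos
    positivity
  rw [← ofReal_integral_eq_lintegral_ofReal hint (ae_of_all _ fun v => by positivity), hval]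

/-- The inner integral, split at `‖z - z'‖ = √s`; the bound does not depend on `z` or `x'`. -/
lemma lintegral_inner_le (d : ℕ) (α : ℝ) (hαd : α < d / 2) (K : ℝ) (hK0 : 0 ≤ K)
    (hK : ∀ R : ℝ, 0 < R → ∫⁻ w in Metric.ball (0 : EuclideanSpace ℝ (Fin d)) R,
        ENNReal.ofReal (‖w‖ ^ (2 * α - (d : ℝ))) = ENNReal.ofReal (K * R ^ (2 * α)))
    (s : ℝ) (hs : 0 < s) (z x' : EuclideanSpace ℝ (Fin d)) :
    ∫⁻ z' : EuclideanSpace ℝ (Fin d), ENNReal.ofReal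
        (Real.exp (-‖z' - x'‖ ^ 2 / (2 * s)) * ‖z - z'‖ ^ (2 * α - (d : ℝ)))
      ≤ ENNReal.ofReal (K * s ^ α
          + s ^ ((2 * α - (d : ℝ)) / 2) * (2 * Real.pi * s) ^ ((d : ℝ) / 2)) := by
  have hpi := Real.pi_pos
  have hR : 0 < Real.sqrt s := Real.sqrt_pos.2 hs
  have hsq : ∀ a : ℝ, Real.sqrt s ^ a = s ^ (a / 2) := by
    intro a
    rw [Real.sqrt_eq_rpow, ← Real.rpow_mul hs.le]
    congr 1
    ring
  set F : EuclideanSpace ℝ (Fin d) → ℝ≥0∞ := (Metric.ball 0 (Real.sqrt s)).indicator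
    (fun w => ENNReal.ofReal (‖w‖ ^ (2 * α - (d : ℝ)))) with hF
  have hpt : ∀ z' : EuclideanSpace ℝ (Fin d), ENNReal.ofReal
        (Real.exp (-‖z' - x'‖ ^ 2 / (2 * s)) * ‖z - z'‖ ^ (2 * α - (d : ℝ)))
      ≤ F (z - z') + ENNReal.ofReal (s ^ ((2 * α - (d : ℝ)) / 2))
          * ENNReal.ofReal (Real.exp (-‖z' - x'‖ ^ 2 / (2 * s))) := by
    intro z'
    by_cases h : ‖z - z'‖ < Real.sqrt s
    · refine le_add_of_le_of_nonneg ?_ zero_le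
      have hm : z - z' ∈ Metric.ball (0 : EuclideanSpace ℝ (Fin d)) (Real.sqrt s) := by
        simpa using h
      rw [hF, Set.indicator_of_mem hm]
      refine ENNReal.ofReal_le_ofReal (mul_le_of_le_one_left (by positivity) ?_)
      rw [Real.exp_le_one_iff, neg_div]
      have : 0 ≤ ‖z' - x'‖ ^ 2 / (2 * s) := by positivity
      linarith
    · refine le_add_of_nonneg_of_le zero_le ?_
      rw [← ENNReal.ofReal_mul (by positivity), mul_comm, ← hsq]
      refine ENNReal.ofReal_le_ofReal (mul_le_mul_of_nonneg_right ?_ (by positivity))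
      exact Real.rpow_le_rpow_of_nonpos hR (not_lt.1 h) (by linarith)
  refine (lintegral_mono hpt).trans ?_
  rw [lintegral_add_right _ (by fun_prop), lintegral_const_mul _ (by fun_prop),
    lintegral_gauss d s hs, lintegral_sub_left_eq_self F z, hF,
    lintegral_indicator measurableSet_ball, hK _ hR, hsq,
    ← ENNReal.ofReal_mul (by positivity), ← ENNReal.ofReal_add (by positivity) (by positivity)]
  rw [show 2 * α / 2 = α by ring]

/-- Under Dalang's condition `(d-2)/2 < α < d/2`, the double Gaussian–Riesz integral is
bounded by `C·s^{(2α-d)/2}` uniformly in the centers `x, x'`; moreover, since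
`(2α-d)/2 > -1`, the bound `s^{(2α-d)/2}` is integrable over any bounded interval `(0,t)`. -/
theorem double_gauss_riesz_bound (d : ℕ) (hd : 1 ≤ d) (α : ℝ)
    (hα0 : 0 < α) (hαd : α < d / 2) (hDalang : ((d : ℝ) - 2) / 2 < α) :
    (∃ C > (0 : ℝ), ∀ s : ℝ, 0 < s → ∀ x x' : EuclideanSpace ℝ (Fin d),
      (∫⁻ z : EuclideanSpace ℝ (Fin d), ∫⁻ z' : EuclideanSpace ℝ (Fin d),
          ENNReal.ofReal ((2 * Real.pi * s) ^ (-(d : ℝ))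
            * Real.exp (-‖z - x‖ ^ 2 / (2 * s))
            * Real.exp (-‖z' - x'‖ ^ 2 / (2 * s)) * ‖z - z'‖ ^ (2 * α - (d : ℝ))))
        ≤ ENNReal.ofReal (C * s ^ ((2 * α - (d : ℝ)) / 2))) ∧
    ∀ t : ℝ, 0 < t →
      (∫⁻ s in Set.Ioc (0 : ℝ) t, ENNReal.ofReal (s ^ ((2 * α - (d : ℝ)) / 2))) ≠ ⊤ := by
  have hpi := Real.pi_pos
  refine ⟨?_, fun t ht => ?_⟩
  · obtain ⟨K, hK0, hK⟩ := lintegral_ball_norm_rpow d hd α hα0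
    -- The two summands come from the regions `‖z - z'‖ < √s` and `‖z - z'‖ ≥ √s`.
    refine ⟨K * (2 * Real.pi) ^ (-((d : ℝ) / 2)) + 1, by positivity, fun s hs x x' => ?_⟩
    have hc : 0 ≤ (2 * Real.pi * s) ^ (-(d : ℝ)) := by positivity
    have hinner : ∀ z : EuclideanSpace ℝ (Fin d), ∫⁻ z' : EuclideanSpace ℝ (Fin d),
          ENNReal.ofReal ((2 * Real.pi * s) ^ (-(d : ℝ))
            * Real.exp (-‖z - x‖ ^ 2 / (2 * s))
            * Real.exp (-‖z' - x'‖ ^ 2 / (2 * s)) * ‖z - z'‖ ^ (2 * α - (d : ℝ)))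
        ≤ ENNReal.ofReal ((2 * Real.pi * s) ^ (-(d : ℝ)) * (K * s ^ α
          + s ^ ((2 * α - (d : ℝ)) / 2) * (2 * Real.pi * s) ^ ((d : ℝ) / 2)))
          * ENNReal.ofReal (Real.exp (-‖z - x‖ ^ 2 / (2 * s))) := by
      intro z
      have hsplit : ∀ z' : EuclideanSpace ℝ (Fin d),
          ENNReal.ofReal ((2 * Real.pi * s) ^ (-(d : ℝ))
            * Real.exp (-‖z - x‖ ^ 2 / (2 * s))
            * Real.exp (-‖z' - x'‖ ^ 2 / (2 * s)) * ‖z - z'‖ ^ (2 * α - (d : ℝ)))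
          = ENNReal.ofReal ((2 * Real.pi * s) ^ (-(d : ℝ)) * Real.exp (-‖z - x‖ ^ 2 / (2 * s)))
            * ENNReal.ofReal
              (Real.exp (-‖z' - x'‖ ^ 2 / (2 * s)) * ‖z - z'‖ ^ (2 * α - (d : ℝ))) := by
        intro z'
        rw [← ENNReal.ofReal_mul (by positivity), mul_assoc _ (Real.exp _) (_ ^ _)]
      simp_rw [hsplit]
      rw [lintegral_const_mul' _ _ ENNReal.ofReal_ne_top]
      refine (mul_le_mul_right (lintegral_inner_le d α hαd K hK0 hK s hs z x') _).trans_eq ?_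
      rw [← ENNReal.ofReal_mul (by positivity), ← ENNReal.ofReal_mul (by positivity)]
      congr 1
      ring
    refine (lintegral_mono hinner).trans_eq ?_
    rw [lintegral_const_mul' _ _ ENNReal.ofReal_ne_top, lintegral_gauss d s hs,
      ← ENNReal.ofReal_mul (by positivity)]
    congr 1
    have h2s : 0 < 2 * Real.pi * s := by positivity
    have e1 : (2 * Real.pi * s) ^ (-(d : ℝ)) * (2 * Real.pi * s) ^ ((d : ℝ) / 2)
        = (2 * Real.pi) ^ (-((d : ℝ) / 2)) * s ^ (-((d : ℝ) / 2)) := by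
      rw [← Real.rpow_add h2s, ← Real.mul_rpow (by positivity) hs.le]
      congr 1
      ring
    have e2 : (2 * Real.pi) ^ (-((d : ℝ) / 2)) * s ^ (-((d : ℝ) / 2))
        * (2 * Real.pi * s) ^ ((d : ℝ) / 2) = 1 := by
      rw [← Real.mul_rpow (by positivity) hs.le, ← Real.rpow_add h2s, neg_add_cancel,
        Real.rpow_zero]
    have e3 : s ^ α * s ^ (-((d : ℝ) / 2)) = s ^ ((2 * α - (d : ℝ)) / 2) := by
      rw [← Real.rpow_add hs]
      congr 1
      ring
    rw [mul_right_comm, e1, ← e3]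
    linear_combination (s ^ α * s ^ (-((d : ℝ) / 2))) * e2
  · have h := intervalIntegral.intervalIntegrable_rpow' (a := 0) (b := t)
      (r := (2 * α - (d : ℝ)) / 2) (by linarith)
    rw [intervalIntegrable_iff_integrableOn_Ioc_of_le ht.le] at h
    exact h.lintegral_lt_top.ne
end
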